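/- Let J ⊆ Δ, let L be a commutative ring, and let D ⊆ Φ be a J-quasi-parabolic subset. Then ∂ maps ⊕_{α ∈ Δ\J} L[W^{J∪{α}}(D)] into L[W^J(D)], and the resulting sequence ⊕_{α ∈ Δ\J} L[W^{J∪{α}}(D)] → L[W^J(D)] → M_J(L), obtained by restricting ∂ and ∇, is exact at L[W^J(D)]: an element of L[W^J(D)] lies in the kernel of the restriction of ∇ if and only if it lies in the image of the restriction of ∂. -/

import Mathlib

/-! Common framework: a reduced (crystallographic) root system `Φ` in a real vector
space `V`, with Weyl group `W` (generated by the reflections `s_α`, `α ∈ Φ`, inside the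
group of linear automorphisms of `V`), a base `Δ` of simple roots with positive system
`Pos = Φ⁺`, and the associated combinatorics. -/

open scoped Classical Pointwise

namespace PaperSp

variable {V : Type} [AddCommGroup V] [Module ℝ V]

/-- The data of a reduced crystallographic root system in `V`:  a finite spanning set
`Phi` of nonzero vectors together with, for each root `α`, a linear functional
`pairing α = ⟨·, α∨⟩` taking the value `2` at `α`, such that the associated reflections
`s_α : β ↦ β − ⟨β, α∨⟩α` preserve `Phi`, all pairings are integral, and the only
multiples of a root `α` which are roots are `±α`. -/
structure RootSystemData (V : Type) [AddCommGroup V] [Module ℝ V] : Type where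
  Phi : Set V
  pairing : V → V →ₗ[ℝ] ℝ
  pairing_self : ∀ α, α ∈ Phi → pairing α α = 2
  finite : Phi.Finite
  span_top : Submodule.span ℝ Phi = ⊤
  zero_not_mem : (0 : V) ∉ Phi
  crystallographic : ∀ α ∈ Phi, ∀ β ∈ Phi, ∃ n : ℤ, pairing α β = (n : ℝ)
  reduced : ∀ α ∈ Phi, ∀ t : ℝ, t • α ∈ Phi → t = 1 ∨ t = -1
  reflect_mem : ∀ α ∈ Phi, ∀ β ∈ Phi, β - pairing α β • α ∈ Phi

/-- The reflection `s_α` associated to a root `α` (the identity if `α ∉ Φ`). -/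
noncomputable def RootSystemData.refl (R : RootSystemData V) (α : V) : V ≃ₗ[ℝ] V :=
  if h : α ∈ R.Phi then Module.reflection (R.pairing_self α h) else 1

/-- The set of reflections `{s_α : α ∈ K}` associated to a set `K` of roots. -/
noncomputable def refls (R : RootSystemData V) (K : Set V) : Set (V ≃ₗ[ℝ] V) :=
  {s | ∃ α ∈ K, s = R.refl α}

/-- The Weyl group `W`, generated by all reflections `s_α`, `α ∈ Φ`. -/
noncomputable def weylGroup (R : RootSystemData V) : Subgroup (V ≃ₗ[ℝ] V) :=
  Subgroup.closure (refls R R.Phi)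

/-- The subgroup `W_J` generated by the reflections `s_α`, `α ∈ J`. -/
noncomputable def WsubJ (R : RootSystemData V) (J : Set V) : Subgroup (V ≃ₗ[ℝ] V) :=
  Subgroup.closure (refls R J)

/-- The word length of `w` with respect to a generating set `S` of a group. -/
noncomputable def lengthWrt {G : Type*} [Group G] (S : Set G) (w : G) : ℕ :=
  sInf {n | ∃ ls : List G, ls.length = n ∧ (∀ x ∈ ls, x ∈ S) ∧ ls.prod = w}

/-- The length function `ℓ` on `W` with respect to the simple reflections
`S = {s_α : α ∈ Δ}`. -/
noncomputable def len (R : RootSystemData V) (Δ : Set V) (w : V ≃ₗ[ℝ] V) : ℕ :=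
  lengthWrt (refls R Δ) w

/-- `Pos` and `Δ` form a positive system with base `Δ` for the root system `R`:
`Φ = Pos ⊔ (−Pos)`, `Δ ⊆ Pos` is linearly independent, and every positive root is a
nonnegative integral combination of simple roots. -/
structure IsBase (R : RootSystemData V) (Pos Δ : Set V) : Prop where
  pos_sub : Pos ⊆ R.Phi
  mem_or_neg : ∀ α ∈ R.Phi, α ∈ Pos ∨ -α ∈ Pos
  not_both : ∀ α : V, ¬(α ∈ Pos ∧ -α ∈ Pos)
  delta_sub : Δ ⊆ Pos
  indep : LinearIndependent ℝ (fun a : Δ => (a : V))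
  decomp : ∀ β ∈ Pos, ∃ c : V →₀ ℕ, (c.support : Set V) ⊆ Δ ∧
    β = c.sum (fun a m => (m : ℝ) • a)

/-- The set `W^J = {w ∈ W : w(α) ∈ Φ⁺ for all α ∈ J}` of minimal length representatives
of `W/W_J`. -/
noncomputable def WupJ (R : RootSystemData V) (Pos : Set V) (J : Set V) :
    Set (V ≃ₗ[ℝ] V) :=
  {w | w ∈ weylGroup R ∧ ∀ α ∈ J, w α ∈ Pos}

/-- The set `V^J = W^J \ ⋃_{α ∈ Δ\J} W^{J∪{α}}`. -/
noncomputable def VupJ (R : RootSystemData V) (Pos Δ : Set V) (J : Set V) :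
    Set (V ≃ₗ[ℝ] V) :=
  {w | w ∈ WupJ R Pos J ∧ ∀ α ∈ Δ, α ∉ J → w ∉ WupJ R Pos (J ∪ {α})}

/-- `Φ_J(1) = Φ⁻ \ (Φ⁻ ∩ W_J·J)`. -/
noncomputable def PhiJone (R : RootSystemData V) (Pos : Set V) (J : Set V) : Set V :=
  (R.Phi \ Pos) \ {β | ∃ v ∈ WsubJ R J, ∃ α ∈ J, β = v α}

/-- `Φ_J(w) = w · Φ_J(1)`. -/
noncomputable def PhiJ (R : RootSystemData V) (Pos : Set V) (J : Set V)
    (w : V ≃ₗ[ℝ] V) : Set V :=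
  (fun x => w x) '' (PhiJone R Pos J)

/-- `hProjJ R Pos J pJ` says that `pJ` is the projection `w ↦ (w)^J` sending an element
of `W` to the unique element of `W^J` in the coset `w W_J`. -/
noncomputable def IsProjJ (R : RootSystemData V) (Pos : Set V) (J : Set V)
    (pJ : (V ≃ₗ[ℝ] V) → (V ≃ₗ[ℝ] V)) : Prop :=
  ∀ w ∈ weylGroup R, pJ w ∈ WupJ R Pos J ∧ (pJ w)⁻¹ * w ∈ WsubJ R J

/-- The product `s_i ⋯ s_1` of the first `i` members of a sequence in a group. -/
noncomputable def chainProd {G : Type*} [Group G] (s : ℕ → G) (i : ℕ) : G :=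
  (((List.range' 1 i).map s).reverse).prod

/-- The chain `w^(0) = w`, `w^(i) = (s_i ⋯ s_1 w)^J` associated to `w` and a sequence
of simple reflections. -/
noncomputable def chainElt {G : Type*} [Group G] (pJ : G → G) (s : ℕ → G) (w : G)
    (i : ℕ) : G :=
  if i = 0 then w else pJ (chainProd s i * w)

/-- The partial order `<_J`:  `w <_J w'` iff there are simple reflections
`s_1, …, s_r` (`r ≥ 1`) such that, with `w^(i) = (s_i ⋯ s_1 w)^J`, the lengths
`ℓ(w^(i))` are strictly increasing and `w^(r) = w'`.  Taking `pJ = id`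
(and `J = ∅`) gives the weak left order `<_∅`. -/
noncomputable def ltJ {G : Type*} [Group G] (S : Set G) (ℓ : G → ℕ) (pJ : G → G)
    (w w' : G) : Prop :=
  ∃ r : ℕ, 1 ≤ r ∧ ∃ s : ℕ → G,
    (∀ m, 1 ≤ m → m ≤ r → s m ∈ S) ∧
    (∀ m, 1 ≤ m → m ≤ r → ℓ (chainElt pJ s w (m - 1)) < ℓ (chainElt pJ s w m)) ∧
    chainElt pJ s w r = w'

/-- `w` is the longest element of a subgroup `H` of `W` (with respect to `ℓ`). -/
noncomputable def IsLongestIn (R : RootSystemData V) (Δ : Set V)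
    (H : Subgroup (V ≃ₗ[ℝ] V)) (w : V ≃ₗ[ℝ] V) : Prop :=
  w ∈ H ∧ ∀ v ∈ H, len R Δ v ≤ len R Δ w

end PaperSp

namespace PaperSp

variable {V : Type} [AddCommGroup V] [Module ℝ V]

/-- The index type of the direct sum `⊕_{α ∈ Δ\J} L[W^{J∪{α}}]`. -/
noncomputable def MJdom (R : RootSystemData V) (Pos Δ J : Set V) : Type :=
  Σ a : ↥(Δ \ J), ↥(WupJ R Pos (J ∪ {(a : V)}))

/-- The map `∂ : ⊕_{α ∈ Δ\J} L[W^{J∪{α}}] → L[W^J]` sending the basis element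
`w ∈ W^{J∪{α}}` to the sum of all `w' ∈ W^J` with `w' W_J ⊆ w W_{J∪{α}}`. -/
noncomputable def MJd (R : RootSystemData V) (Pos Δ J : Set V)
    (L : Type) [CommRing L] :
    ((MJdom R Pos Δ J) →₀ L) →ₗ[L] ((↥(WupJ R Pos J)) →₀ L) :=
  Finsupp.lift _ L _ (fun x =>
    ∑ᶠ w' : ↥(WupJ R Pos J),
      if (↑w' : V ≃ₗ[ℝ] V) • ((WsubJ R J : Set (V ≃ₗ[ℝ] V)))
          ⊆ (↑(x.2) : V ≃ₗ[ℝ] V) • ((WsubJ R (J ∪ {(x.1 : V)}) : Set (V ≃ₗ[ℝ] V)))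
        then Finsupp.single w' (1 : L) else 0)

/-- The module `M_J(L)`:  the cokernel of `∂`. -/
noncomputable def MJmod (R : RootSystemData V) (Pos Δ J : Set V)
    (L : Type) [CommRing L] : Type :=
  ((↥(WupJ R Pos J)) →₀ L) ⧸ LinearMap.range (MJd R Pos Δ J L)

noncomputable instance (R : RootSystemData V) (Pos Δ J : Set V)
    (L : Type) [CommRing L] : AddCommGroup (MJmod R Pos Δ J L) :=
  Submodule.Quotient.addCommGroup _

noncomputable instance (R : RootSystemData V) (Pos Δ J : Set V)
    (L : Type) [CommRing L] : Module L (MJmod R Pos Δ J L) :=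
  Submodule.Quotient.module _

/-- The quotient map `∇ : L[W^J] → M_J(L)`. -/
noncomputable def MJnabla (R : RootSystemData V) (Pos Δ J : Set V)
    (L : Type) [CommRing L] :
    ((↥(WupJ R Pos J)) →₀ L) →ₗ[L] MJmod R Pos Δ J L :=
  Submodule.mkQ _

end PaperSp

namespace PaperSp

variable {V : Type} [AddCommGroup V] [Module ℝ V]

/-- A subset `D ⊆ Φ` is `J`-quasi-parabolic if it is the intersection of the sets
`Φ_J(w)` over some nonempty set of `w ∈ W`. -/
noncomputable def IsQuasiParabolic (R : RootSystemData V) (Pos J : Set V)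
    (D : Set V) : Prop :=
  ∃ Θ : Set (V ≃ₗ[ℝ] V), Θ.Nonempty ∧ Θ ⊆ (weylGroup R : Set (V ≃ₗ[ℝ] V)) ∧
    D = ⋂ w ∈ Θ, PhiJ R Pos J w

/-- `W^J(D) = {w ∈ W^J : D ⊆ Φ_J(w)}`. -/
noncomputable def WupJD (R : RootSystemData V) (Pos J D : Set V) :
    Set (V ≃ₗ[ℝ] V) :=
  {w | w ∈ WupJ R Pos J ∧ D ⊆ PhiJ R Pos J w}

lemma WupJD_subset (R : RootSystemData V) (Pos J D : Set V) :
    WupJD R Pos J D ⊆ WupJ R Pos J := fun _ h => h.1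

/-- The index type of `⊕_{α ∈ Δ\J} L[W^{J∪{α}}(D)]`. -/
noncomputable def MJdomD (R : RootSystemData V) (Pos Δ J D : Set V) : Type :=
  Σ a : ↥(Δ \ J), ↥(WupJD R Pos (J ∪ {(a : V)}) D)

/-- Inclusion `⊕_{α} L[W^{J∪{α}}(D)] ↪ ⊕_{α} L[W^{J∪{α}}]`. -/
noncomputable def inclDom (R : RootSystemData V) (Pos Δ J D : Set V)
    (L : Type) [CommRing L] :
    ((MJdomD R Pos Δ J D) →₀ L) →ₗ[L] ((MJdom R Pos Δ J) →₀ L) :=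
  Finsupp.lmapDomain L L
    (fun x => ⟨x.1, Set.inclusion (WupJD_subset R Pos (J ∪ {(x.1 : V)}) D) x.2⟩)

/-- Inclusion `L[W^J(D)] ↪ L[W^J]`. -/
noncomputable def inclCod (R : RootSystemData V) (Pos J D : Set V)
    (L : Type) [CommRing L] :
    ((↥(WupJD R Pos J D)) →₀ L) →ₗ[L] ((↥(WupJ R Pos J)) →₀ L) :=
  Finsupp.lmapDomain L L (Set.inclusion (WupJD_subset R Pos J D))

/-!
All the modules `L[W^K]` embed into the functions on `W` by sending `w` to the indicator of the
coset `w W_K`. There `∂` becomes an inclusion: `M_J(L)` is the quotient of the span of the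
`J`-cosets by the span of the larger cosets. Call `w W_K` attached to `D` if `w ∈ W^K(D)`. Exactness
says that the span of the `J`-cosets attached to `D` meets the span of all larger cosets in the span
of those attached to `D`.

If `W^J(D)` is nonempty, there is a regular functional `t` which is positive on `D`. Order the Weyl
group by the values `t (w ρ)`, where `ρ` is the Weyl vector; the maximum on a coset `w W_K` is
attained exactly at the element sending `K` into `{t > 0}`. By induction every `J`-coset attached to
`D` is, modulo larger cosets attached to `D`, a combination of cosets in the analogue `V^J_t` of
`V^J` for the positive system `{t > 0}`; the larger cosets which occur are attached to `D` because
`t` is positive on `D`. Conversely, taking alternating sums over `w W_{Δ \ J}` kills all larger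
cosets, while on combinations of cosets in `V^J_t` it is unitriangular; so these meet the larger
cosets only in `0`, and the modular law concludes.
-/

section Reflections

namespace RootSystemData

variable {R : RootSystemData V}

lemma refl_of_notMem {α : V} (hα : α ∉ R.Phi) : R.refl α = 1 :=
  dif_neg hα

lemma refl_apply {α : V} (hα : α ∈ R.Phi) (x : V) :
    R.refl α x = x - R.pairing α x • α := by
  rw [refl, dif_pos hα, Module.reflection_apply]

lemma refl_apply_self {α : V} (hα : α ∈ R.Phi) : R.refl α α = -α := by
  rw [refl, dif_pos hα, Module.reflection_apply_self]

lemma refl_mul_self (α : V) : R.refl α * R.refl α = 1 := by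
  by_cases hα : α ∈ R.Phi
  · rw [refl, dif_pos hα]
    exact LinearEquiv.ext (Module.involutive_reflection (R.pairing_self α hα))
  · rw [refl_of_notMem hα, mul_one]

lemma refl_inv (α : V) : (R.refl α)⁻¹ = R.refl α :=
  inv_eq_of_mul_eq_one_left (refl_mul_self α)

lemma refl_refl_apply (α x : V) : R.refl α (R.refl α x) = x :=
  DFunLike.congr_fun (refl_mul_self α) x

lemma ne_zero {α : V} (hα : α ∈ R.Phi) : α ≠ 0 :=
  ne_of_mem_of_not_mem hα R.zero_not_mem

lemma refl_ne_one {α : V} (hα : α ∈ R.Phi) : R.refl α ≠ 1 := by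
  intro h
  have h_neg : R.pairing α (R.refl α α) = -2 := by
    rw [refl_apply_self hα, map_neg, R.pairing_self α hα]
  rw [h, LinearEquiv.coe_one, id, R.pairing_self α hα] at h_neg
  norm_num at h_neg

end RootSystemData

variable {R : RootSystemData V} {K K' : Set V}

open RootSystemData

lemma refl_mem_WsubJ {α : V} (hα : α ∈ K) : R.refl α ∈ WsubJ R K :=
  Subgroup.subset_closure ⟨α, hα, rfl⟩

lemma WsubJ_mono (h : K ⊆ K') : WsubJ R K ≤ WsubJ R K' :=
  Subgroup.closure_mono fun _ ⟨α, hα, hs⟩ => ⟨α, h hα, hs⟩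

lemma WsubJ_le_weylGroup : WsubJ R K ≤ weylGroup R := by
  refine (Subgroup.closure_le _).2 ?_
  rintro _ ⟨α, -, rfl⟩
  by_cases hα : α ∈ R.Phi
  · exact refl_mem_WsubJ hα
  · rw [refl_of_notMem hα]
    exact one_mem _

lemma weylGroup_le_stabilizer : weylGroup R ≤ MulAction.stabilizer (V ≃ₗ[ℝ] V) R.Phi := by
  refine (Subgroup.closure_le _).2 ?_
  rintro _ ⟨α, hα, rfl⟩
  rw [SetLike.mem_coe, MulAction.mem_stabilizer_set_iff_smul_set_subset R.finite]
  rintro _ ⟨β, hβ, rfl⟩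
  change R.refl α β ∈ R.Phi
  rw [refl_apply hα]
  exact R.reflect_mem α hα β hβ

lemma apply_mem_Phi {w : V ≃ₗ[ℝ] V} (hw : w ∈ weylGroup R) {β : V} :
    w β ∈ R.Phi ↔ β ∈ R.Phi :=
  MulAction.mem_stabilizer_set.1 (weylGroup_le_stabilizer hw) β

instance : Finite (weylGroup R) := by
  have := R.finite.to_subtype
  refine Finite.of_injective
    (fun w : weylGroup R => fun β : R.Phi => (⟨w.1 β, (apply_mem_Phi w.2).2 β.2⟩ : R.Phi)) ?_
  intro w w' h
  refine Subtype.ext (LinearEquiv.toLinearMap_injective (LinearMap.ext_on R.span_top ?_))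
  exact fun β hβ => congrArg Subtype.val (congrFun h ⟨β, hβ⟩)

noncomputable instance : Fintype (WsubJ R K) :=
  have := Finite.of_injective (Subgroup.inclusion (WsubJ_le_weylGroup (R := R) (K := K)))
    (Subgroup.inclusion_injective _)
  Fintype.ofFinite _

noncomputable instance {Pos : Set V} : Fintype (WupJ R Pos K) :=
  have := Finite.of_injective (fun w : WupJ R Pos K => (⟨w.1, w.2.1⟩ : weylGroup R))
    fun _ _ h => Subtype.ext (congrArg (fun w : weylGroup R => w.1) h)
  Fintype.ofFinite _

lemma pairing_apply_apply {w : V ≃ₗ[ℝ] V} (hw : w ∈ weylGroup R) {α : V} (hα : α ∈ R.Phi) (x : V) :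
    R.pairing (w α) (w x) = R.pairing α x := by
  have hwα : w α ∈ R.Phi := (apply_mem_Phi hw).2 hα
  have key : R.pairing (w α) = R.pairing α ∘ₗ w.symm.toLinearMap := by
    refine Module.Dual.eq_of_preReflection_mapsTo (x := w α) R.finite R.span_top
      (R.pairing_self _ hwα) (R.reflect_mem _ hwα) (by simp [R.pairing_self α hα]) ?_
    intro γ hγ
    obtain ⟨δ, rfl⟩ := w.surjective γ
    have hδ : w (δ - R.pairing α δ • α) ∈ R.Phi :=
      (apply_mem_Phi hw).2 (R.reflect_mem α hα δ ((apply_mem_Phi hw).1 hγ))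
    simpa [Module.preReflection_apply] using hδ
  simp [key]

lemma mul_refl {w : V ≃ₗ[ℝ] V} (hw : w ∈ weylGroup R) {α : V} (hα : α ∈ R.Phi) :
    w * R.refl α = R.refl (w α) * w := by
  ext x
  simp only [LinearEquiv.mul_apply, refl_apply hα, refl_apply ((apply_mem_Phi hw).2 hα), map_sub,
    map_smul, pairing_apply_apply hw hα]

lemma apply_sub_self_mem_span {v : V ≃ₗ[ℝ] V} (hv : v ∈ WsubJ R K) (x : V) :
    v x - x ∈ Submodule.span ℝ K := by
  induction hv using Subgroup.closure_induction generalizing x with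
  | mem _ hs =>
    obtain ⟨α, hα, rfl⟩ := hs
    by_cases hαΦ : α ∈ R.Phi
    · rw [refl_apply hαΦ, sub_sub_cancel_left]
      exact Submodule.neg_mem _ (Submodule.smul_mem _ _ (Submodule.subset_span hα))
    · simp [refl_of_notMem hαΦ]
  | one => simp
  | mul u v _ _ hu hv =>
    simpa using add_mem (hu (v x)) (hv x)
  | inv v _ hv =>
    simpa using neg_mem (hv (v⁻¹ x))

lemma apply_mem_span_iff {v : V ≃ₗ[ℝ] V} (hv : v ∈ WsubJ R K) {x : V} :
    v x ∈ Submodule.span ℝ K ↔ x ∈ Submodule.span ℝ K :=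
  ⟨fun h => by simpa using sub_mem h (apply_sub_self_mem_span hv x),
    fun h => by simpa using add_mem (apply_sub_self_mem_span hv x) h⟩

end Reflections

section PositiveSystems

/-- A linear functional is regular if it vanishes at no root, i.e. lies in an open Weyl chamber. -/
def IsRegular (R : RootSystemData V) (t : V →ₗ[ℝ] ℝ) : Prop :=
  ∀ β ∈ R.Phi, t β ≠ 0

/-- The positive system of roots cut out by a (regular) linear functional. -/
def posSystem (R : RootSystemData V) (t : V →ₗ[ℝ] ℝ) : Set V :=
  {β ∈ R.Phi | 0 < t β}

variable {R : RootSystemData V} {Pos Δ K : Set V} {t : V →ₗ[ℝ] ℝ}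

open RootSystemData

lemma IsRegular.neg (ht : IsRegular R t) : IsRegular R (-t) :=
  fun β hβ => neg_ne_zero.2 (ht β hβ)

lemma IsRegular.comp (ht : IsRegular R t) {w : V ≃ₗ[ℝ] V} (hw : w ∈ weylGroup R) :
    IsRegular R (t ∘ₗ w.toLinearMap) :=
  fun β hβ => ht (w β) ((apply_mem_Phi hw).2 hβ)

namespace IsBase

lemma delta_sub_Phi (hB : IsBase R Pos Δ) : Δ ⊆ R.Phi :=
  hB.delta_sub.trans hB.pos_sub

lemma neg_mem_of_notMem (hB : IsBase R Pos Δ) {β : V} (hβ : β ∈ R.Phi) (h : β ∉ Pos) :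
    -β ∈ Pos :=
  (hB.mem_or_neg β hβ).resolve_left h

lemma exists_forall_apply_eq (hB : IsBase R Pos Δ) (c : V → ℝ) :
    ∃ g : V →ₗ[ℝ] ℝ, ∀ α ∈ Δ, g α = c α := by
  have h : LinearIndepOn ℝ id Δ := hB.indep
  refine ⟨(Module.Basis.extend h).constr ℝ (fun i => c i), fun α hα => ?_⟩
  simpa using (Module.Basis.extend h).constr_basis ℝ (fun i => c i) ⟨α, h.subset_extend _ hα⟩

lemma apply_nonneg (hB : IsBase R Pos Δ) (ht : ∀ α ∈ Δ, 0 ≤ t α) {β : V} (hβ : β ∈ Pos) :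
    0 ≤ t β := by
  obtain ⟨c, hc, rfl⟩ := hB.decomp β hβ
  rw [Finsupp.sum, map_sum]
  refine Finset.sum_nonneg fun a ha => ?_
  rw [map_smul, smul_eq_mul]
  exact mul_nonneg (Nat.cast_nonneg _) (ht a (hc ha))

lemma mem_span_of_apply_eq_zero (hB : IsBase R Pos Δ) (ht : ∀ α ∈ Δ, 0 ≤ t α) {β : V}
    (hβ : β ∈ Pos) (htβ : t β = 0) : β ∈ Submodule.span ℝ {α ∈ Δ | t α = 0} := by
  obtain ⟨c, hc, rfl⟩ := hB.decomp β hβ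
  rw [Finsupp.sum, map_sum, Finset.sum_eq_zero_iff_of_nonneg] at htβ
  · refine Submodule.sum_mem _ fun a ha =>
      Submodule.smul_mem _ _ (Submodule.subset_span ⟨hc ha, ?_⟩)
    simpa [Finsupp.mem_support_iff.1 ha] using htβ a ha
  · intro a ha
    rw [map_smul, smul_eq_mul]
    exact mul_nonneg (Nat.cast_nonneg _) (ht a (hc ha))

lemma apply_pos_of_mem_span (hB : IsBase R Pos Δ) (hK : K ⊆ Δ) (ht : ∀ α ∈ K, 0 < t α) {β : V}
    (hβ : β ∈ Pos) (hβK : β ∈ Submodule.span ℝ K) : 0 < t β := by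
  -- Off `span K` nothing is known about `t`, so it is replaced by a functional positive on `Δ`.
  obtain ⟨g, hg⟩ := hB.exists_forall_apply_eq (fun α => if α ∈ K then t α else 1)
  have hg_pos : ∀ α ∈ Δ, 0 < g α := fun α hα => by
    rw [hg α hα]
    split_ifs with hαK
    exacts [ht α hαK, one_pos]
  have hgβ : 0 < g β := by
    refine (hB.apply_nonneg (fun α hα => (hg_pos α hα).le) hβ).lt_of_ne' fun h => ?_
    have hβ0 := hB.mem_span_of_apply_eq_zero (fun α hα => (hg_pos α hα).le) hβ h
    rw [Set.sep_eq_empty_iff_mem_false.2 fun α hα => (hg_pos α hα).ne', Submodule.span_empty,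
      Submodule.mem_bot] at hβ0
    exact ne_zero (hB.pos_sub hβ) hβ0
  have hgt : Set.EqOn g t K := fun α hα => by rw [hg α (hK hα), if_pos hα]
  rwa [← LinearMap.eqOn_span hgt hβK]

lemma exists_isRegular (hB : IsBase R Pos Δ) :
    ∃ t : V →ₗ[ℝ] ℝ, IsRegular R t ∧ posSystem R t = Pos := by
  obtain ⟨t, ht⟩ := hB.exists_forall_apply_eq (fun _ => 1)
  have ht_pos : ∀ β ∈ Pos, 0 < t β := fun β hβ =>
    hB.apply_pos_of_mem_span subset_rfl (fun α hα => by rw [ht α hα]; exact one_pos) hβ <| by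
      simpa using hB.mem_span_of_apply_eq_zero (t := 0) (fun _ _ => le_rfl) hβ rfl
  have ht_neg : ∀ β ∈ R.Phi, β ∉ Pos → t β < 0 := fun β hβ h => by
    simpa using ht_pos _ (hB.neg_mem_of_notMem hβ h)
  refine ⟨t, fun β hβ => ?_, Set.Subset.antisymm (fun β hβ => ?_) fun β hβ => ?_⟩
  · by_cases h : β ∈ Pos
    exacts [(ht_pos β h).ne', (ht_neg β hβ h).ne]
  · exact by_contra fun h => lt_asymm hβ.2 (ht_neg β hβ.1 h)
  · exact ⟨hB.pos_sub hβ, ht_pos β hβ⟩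

lemma refl_mem_pos (hB : IsBase R Pos Δ) {α β : V} (hα : α ∈ Δ) (hβ : β ∈ Pos) (hne : β ≠ α) :
    R.refl α β ∈ Pos := by
  have hαΦ := hB.delta_sub_Phi hα
  by_contra hcon
  have hneg := hB.neg_mem_of_notMem ((apply_mem_Phi (WsubJ_le_weylGroup (refl_mem_WsubJ hα))).2
    (hB.pos_sub hβ)) hcon
  -- `g` is `s_α`-invariant, nonnegative on `Pos`, and zero on no positive root outside `ℝ α`.
  obtain ⟨g, hg⟩ := hB.exists_forall_apply_eq (fun a => if a = α then 0 else 1)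
  have hg_nonneg : ∀ a ∈ Δ, 0 ≤ g a := fun a ha => by
    rw [hg a ha]
    split_ifs <;> norm_num
  have hgα : g α = 0 := by rw [hg α hα, if_pos rfl]
  have hgβ : g β = 0 := by
    refine le_antisymm ?_ (hB.apply_nonneg hg_nonneg hβ)
    simpa [refl_apply hαΦ, hgα] using hB.apply_nonneg hg_nonneg hneg
  have hβ_span : β ∈ Submodule.span ℝ {α} := by
    refine Submodule.span_mono ?_ (hB.mem_span_of_apply_eq_zero hg_nonneg hβ hgβ)
    rintro a ⟨ha, hga⟩
    by_contra h
    rw [hg a ha, if_neg (Set.notMem_singleton_iff.1 h)] at hga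
    exact one_ne_zero hga
  obtain ⟨c, rfl⟩ := Submodule.mem_span_singleton.1 hβ_span
  rcases R.reduced α hαΦ c (hB.pos_sub hβ) with rfl | rfl
  · exact hne (one_smul ℝ α)
  · rw [neg_one_smul] at hβ
    exact hB.not_both α ⟨hB.delta_sub hα, hβ⟩

lemma exists_prod_mul_refl_eq_prod_eraseIdx (hB : IsBase R Pos Δ) {α : V} (hα : α ∈ Δ)
    {l : List V} (hl : ∀ a ∈ l, a ∈ Δ) (h : (l.map R.refl).prod α ∉ Pos) :
    ∃ i < l.length, (l.map R.refl).prod * R.refl α = ((l.eraseIdx i).map R.refl).prod := by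
  induction l with
  | nil => exact absurd (hB.delta_sub hα) h
  | cons a l ih =>
    rw [List.forall_mem_cons] at hl
    rw [List.map_cons, List.prod_cons] at h ⊢
    by_cases h_tail : (l.map R.refl).prod α ∈ Pos
    · have h_eq : (l.map R.refl).prod α = a :=
        by_contra fun hne => h (hB.refl_mem_pos hl.1 h_tail hne)
      have hl_mem : (l.map R.refl).prod ∈ weylGroup R := by
        refine list_prod_mem fun s hs => ?_
        obtain ⟨b, hb, rfl⟩ := List.mem_map.1 hs
        exact WsubJ_le_weylGroup (refl_mem_WsubJ (hl.2 b hb))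
      refine ⟨0, by simp, ?_⟩
      rw [mul_assoc, mul_refl hl_mem (hB.delta_sub_Phi hα), h_eq, ← mul_assoc, refl_mul_self,
        one_mul, List.eraseIdx_zero, List.tail_cons]
    · obtain ⟨i, hi, h_prod⟩ := ih hl.2 h_tail
      exact ⟨i + 1, by simpa using hi, by simp [mul_assoc, h_prod]⟩

lemma exists_prod_apply_notMem (hB : IsBase R Pos Δ) (hK : K ⊆ Δ) (l : List V)
    (hl : ∀ a ∈ l, a ∈ K) (hne : (l.map R.refl).prod ≠ 1) :
    ∃ α ∈ K, (l.map R.refl).prod α ∉ Pos := by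
  induction hn : l.length using Nat.strong_induction_on generalizing l with
  | _ n ih =>
    rcases List.eq_nil_or_concat' l with rfl | ⟨l', α, rfl⟩
    · exact absurd List.prod_nil hne
    have hl' : ∀ a ∈ l', a ∈ K := fun a ha => hl a (by simp [ha])
    have hα : α ∈ K := hl α (by simp)
    have h_prod : ((l' ++ [α]).map R.refl).prod = (l'.map R.refl).prod * R.refl α := by simp
    rw [h_prod] at hne ⊢
    by_cases h : (l'.map R.refl).prod α ∈ Pos
    · refine ⟨α, hα, fun h_neg => hB.not_both _ ⟨h, ?_⟩⟩
      rwa [LinearEquiv.mul_apply, refl_apply_self (hB.delta_sub_Phi (hK hα)), map_neg] at h_neg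
    · obtain ⟨i, hi, h_erase⟩ :=
        hB.exists_prod_mul_refl_eq_prod_eraseIdx (hK hα) (fun a ha => hK (hl' a ha)) h
      rw [h_erase] at hne ⊢
      refine ih _ ?_ _ (fun a ha => hl' a (List.mem_of_mem_eraseIdx ha)) hne rfl
      rw [← hn, List.length_append, List.length_eraseIdx_of_lt hi, List.length_singleton]
      omega

end IsBase

lemma exists_list_of_mem_WsubJ {v : V ≃ₗ[ℝ] V} (hv : v ∈ WsubJ R K) :
    ∃ l : List V, (∀ a ∈ l, a ∈ K) ∧ (l.map R.refl).prod = v := by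
  have cons : ∀ α ∈ K, ∀ v, (∃ l : List V, (∀ a ∈ l, a ∈ K) ∧ (l.map R.refl).prod = v) →
      ∃ l : List V, (∀ a ∈ l, a ∈ K) ∧ (l.map R.refl).prod = R.refl α * v := by
    rintro α hα _ ⟨l, hl, rfl⟩
    exact ⟨α :: l, List.forall_mem_cons.2 ⟨hα, hl⟩, by simp⟩
  induction hv using Subgroup.closure_induction_left with
  | one => exact ⟨[], by simp, rfl⟩
  | mul_left _ hs v _ ih =>
    obtain ⟨α, hα, rfl⟩ := hs
    exact cons α hα v ih
  | inv_mul_cancel _ hs v _ ih =>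
    obtain ⟨α, hα, rfl⟩ := hs
    rw [refl_inv]
    exact cons α hα v ih

lemma IsBase.exists_apply_notMem (hB : IsBase R Pos Δ) (hK : K ⊆ Δ) {v : V ≃ₗ[ℝ] V}
    (hv : v ∈ WsubJ R K) (hne : v ≠ 1) : ∃ α ∈ K, v α ∉ Pos := by
  obtain ⟨l, hl, rfl⟩ := exists_list_of_mem_WsubJ hv
  exact hB.exists_prod_apply_notMem hK l hl hne

end PositiveSystems

section CosetRepresentatives

/-- Twice the Weyl vector: the sum of the positive roots. The values `t (w (twoRho Pos))` of a
functional on its Weyl orbit order the elements of each coset of a parabolic subgroup. -/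
noncomputable def twoRho (Pos : Set V) : V :=
  ∑ᶠ β ∈ Pos, β

variable {R : RootSystemData V} {Pos Δ K : Set V} {t : V →ₗ[ℝ] ℝ}

open RootSystemData

lemma IsBase.refl_twoRho (hB : IsBase R Pos Δ) {α : V} (hα : α ∈ Δ) :
    R.refl α (twoRho Pos) = twoRho Pos - (2 : ℝ) • α := by
  have hαΦ := hB.delta_sub_Phi hα
  have h_fin : (Pos \ {α}).Finite := (R.finite.subset hB.pos_sub).sdiff
  have h_split : twoRho Pos = α + ∑ᶠ β ∈ Pos \ {α}, β := by
    rw [twoRho, ← finsum_mem_insert (fun β => β)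
        (Set.notMem_sdiff_of_mem (Set.mem_singleton α)) h_fin, Set.insert_sdiff_singleton,
      Set.insert_eq_of_mem (hB.delta_sub hα)]
  have h_maps : Set.MapsTo (R.refl α) (Pos \ {α}) (Pos \ {α}) := fun β hβ => by
    refine ⟨hB.refl_mem_pos hα hβ.1 hβ.2, fun h => hB.not_both α ⟨hB.delta_sub hα, ?_⟩⟩
    have hβ_eq := refl_refl_apply (R := R) α β
    rw [Set.mem_singleton_iff.1 h, refl_apply_self hαΦ] at hβ_eq
    exact hβ_eq ▸ hβ.1
  have h_bij : Set.BijOn (R.refl α) (Pos \ {α}) (Pos \ {α}) :=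
    Set.InvOn.bijOn ⟨fun β _ => refl_refl_apply α β, fun β _ => refl_refl_apply α β⟩ h_maps h_maps
  have h_rest : R.refl α (∑ᶠ β ∈ Pos \ {α}, β) = ∑ᶠ β ∈ Pos \ {α}, β :=
    (AddMonoidHom.map_finsum_mem _ (R.refl α).toAddEquiv.toAddMonoidHom h_fin).trans
      (finsum_mem_eq_of_bijOn _ h_bij fun _ _ => rfl)
  rw [h_split, map_add, refl_apply_self hαΦ, h_rest, two_smul]
  abel

lemma IsBase.eq_of_inv_mul_mem_WsubJ (hB : IsBase R Pos Δ) (hK : K ⊆ Δ) {w w' : V ≃ₗ[ℝ] V}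
    (hw : w ∈ WupJ R (posSystem R t) K) (hw' : w' ∈ WupJ R (posSystem R t) K)
    (h : w⁻¹ * w' ∈ WsubJ R K) : w = w' := by
  by_contra hne
  obtain ⟨α, hα, hα_neg⟩ := hB.exists_apply_notMem hK h (inv_mul_eq_one.not.2 hne)
  have hα_Phi : (w⁻¹ * w') α ∈ R.Phi :=
    (apply_mem_Phi (WsubJ_le_weylGroup h)).2 (hB.delta_sub_Phi (hK hα))
  have h_neg : 0 < (t ∘ₗ w.toLinearMap) (-(w⁻¹ * w') α) :=
    hB.apply_pos_of_mem_span hK (fun β hβ => (hw.2 β hβ).2) (hB.neg_mem_of_notMem hα_Phi hα_neg)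
      (neg_mem ((apply_mem_span_iff h).2 (Submodule.subset_span hα)))
  have h_pos : 0 < t (w ((w⁻¹ * w') α)) := by
    rw [← LinearEquiv.mul_apply, mul_inv_cancel_left]
    exact (hw'.2 α hα).2
  rw [map_neg] at h_neg
  exact lt_asymm h_pos (neg_pos.1 h_neg)

lemma IsBase.mem_WupJ_of_forall_le (hB : IsBase R Pos Δ) (ht : IsRegular R t) (hK : K ⊆ Δ)
    {w : V ≃ₗ[ℝ] V} (hw : w ∈ weylGroup R)
    (h : ∀ v ∈ WsubJ R K, t ((w * v) (twoRho Pos)) ≤ t (w (twoRho Pos))) :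
    w ∈ WupJ R (posSystem R t) K := by
  refine ⟨hw, fun α hα => ?_⟩
  have hwα : w α ∈ R.Phi := (apply_mem_Phi hw).2 (hB.delta_sub_Phi (hK hα))
  have h_le := h _ (refl_mem_WsubJ hα)
  rw [LinearEquiv.mul_apply, hB.refl_twoRho (hK hα), map_sub, map_smul, map_sub, map_smul,
    smul_eq_mul] at h_le
  exact ⟨hwα, lt_of_le_of_ne (by linarith) (ht _ hwα).symm⟩

lemma IsBase.exists_mul_mem_WupJ (hB : IsBase R Pos Δ) (ht : IsRegular R t) (hK : K ⊆ Δ)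
    {w : V ≃ₗ[ℝ] V} (hw : w ∈ weylGroup R) :
    ∃ v ∈ WsubJ R K, w * v ∈ WupJ R (posSystem R t) K ∧
      ∀ u ∈ WsubJ R K, t ((w * u) (twoRho Pos)) ≤ t ((w * v) (twoRho Pos)) := by
  obtain ⟨v, hv⟩ := Finite.exists_max fun v : WsubJ R K => t ((w * v) (twoRho Pos))
  refine ⟨v, v.2, hB.mem_WupJ_of_forall_le ht hK (mul_mem hw (WsubJ_le_weylGroup v.2))
    fun u hu => ?_, fun u hu => hv ⟨u, hu⟩⟩
  rw [mul_assoc]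
  exact hv ⟨v * u, mul_mem v.2 hu⟩

lemma IsBase.apply_mul_twoRho_le (hB : IsBase R Pos Δ) (ht : IsRegular R t) (hK : K ⊆ Δ)
    {w v : V ≃ₗ[ℝ] V} (hw : w ∈ WupJ R (posSystem R t) K) (hv : v ∈ WsubJ R K) :
    t ((w * v) (twoRho Pos)) ≤ t (w (twoRho Pos)) := by
  obtain ⟨u, hu, hwu, h_le⟩ := hB.exists_mul_mem_WupJ ht hK hw.1
  rw [← hB.eq_of_inv_mul_mem_WsubJ hK hw hwu (by simpa using hu)] at h_le
  exact h_le v hv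

lemma IsBase.apply_mul_twoRho_lt (hB : IsBase R Pos Δ) (ht : IsRegular R t) (hK : K ⊆ Δ)
    {w v : V ≃ₗ[ℝ] V} (hw : w ∈ WupJ R (posSystem R t) K) (hv : v ∈ WsubJ R K) (hne : v ≠ 1) :
    t ((w * v) (twoRho Pos)) < t (w (twoRho Pos)) := by
  refine (hB.apply_mul_twoRho_le ht hK hw hv).lt_of_ne fun h_eq => hne ?_
  have hwv : w * v ∈ WupJ R (posSystem R t) K := by
    refine hB.mem_WupJ_of_forall_le ht hK (mul_mem hw.1 (WsubJ_le_weylGroup hv)) fun u hu => ?_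
    rw [h_eq, mul_assoc]
    exact hB.apply_mul_twoRho_le ht hK hw (mul_mem hv hu)
  simpa using hB.eq_of_inv_mul_mem_WsubJ hK hw hwv (by simpa using hv)

end CosetRepresentatives

section NegativeRoots

variable {R : RootSystemData V} {Pos Δ D J K : Set V} {t : V →ₗ[ℝ] ℝ} {w w' : V ≃ₗ[ℝ] V}

open RootSystemData

lemma PhiJ_eq_smul : PhiJ R Pos K w = w • PhiJone R Pos K := rfl

lemma mem_PhiJ {β : V} : β ∈ PhiJ R Pos K w ↔ w⁻¹ β ∈ PhiJone R Pos K := by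
  rw [PhiJ_eq_smul, Set.mem_smul_set_iff_inv_smul_mem, LinearEquiv.smul_def]

lemma PhiJ_antitone (h : J ⊆ K) : PhiJ R Pos K w ⊆ PhiJ R Pos J w :=
  Set.image_mono <| Set.sdiff_subset_sdiff_right fun _ ⟨v, hv, α, hα, hβ⟩ =>
    ⟨v, WsubJ_mono h hv, α, h hα, hβ⟩

lemma IsBase.WsubJ_le_stabilizer_PhiJone (hB : IsBase R Pos Δ) (hK : K ⊆ Δ) :
    WsubJ R K ≤ MulAction.stabilizer (V ≃ₗ[ℝ] V) (PhiJone R Pos K) := by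
  have h_fin : (PhiJone R Pos K).Finite := R.finite.sdiff.sdiff
  refine (Subgroup.closure_le _).2 ?_
  rintro _ ⟨α, hα, rfl⟩
  rw [SetLike.mem_coe, MulAction.mem_stabilizer_set_iff_smul_set_subset h_fin]
  rintro _ ⟨β, ⟨⟨hβ, hβ_neg⟩, hβK⟩, rfl⟩
  change R.refl α β ∈ _
  have hαΦ := hB.delta_sub_Phi (hK hα)
  have h_refl : -R.refl α β ∈ Pos := by
    rw [← map_neg]
    refine hB.refl_mem_pos (hK hα) (hB.neg_mem_of_notMem hβ hβ_neg) fun h => hβK ?_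
    exact ⟨R.refl α, refl_mem_WsubJ hα, α, hα, by rw [refl_apply_self hαΦ, ← h, neg_neg]⟩
  refine ⟨⟨(apply_mem_Phi (WsubJ_le_weylGroup (refl_mem_WsubJ hα))).2 hβ,
    fun h => hB.not_both _ ⟨h, h_refl⟩⟩, ?_⟩
  rintro ⟨v, hv, γ, hγ, h⟩
  refine hβK ⟨R.refl α * v, mul_mem (refl_mem_WsubJ hα) hv, γ, hγ, ?_⟩
  rw [LinearEquiv.mul_apply, ← h, refl_refl_apply]

lemma IsBase.PhiJ_congr (hB : IsBase R Pos Δ) (hK : K ⊆ Δ) (h : w⁻¹ * w' ∈ WsubJ R K) :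
    PhiJ R Pos K w' = PhiJ R Pos K w := by
  rw [← mul_inv_cancel_left w w', PhiJ_eq_smul, PhiJ_eq_smul, mul_smul,
    MulAction.mem_stabilizer_iff.1 (hB.WsubJ_le_stabilizer_PhiJone hK h)]

lemma IsBase.subset_PhiJ_of_forall_pos (hB : IsBase R Pos Δ) (hK : K ⊆ Δ)
    (hw : w ∈ WupJ R (posSystem R t) K) (hDt : ∀ β ∈ D, 0 < t β) (hD : D ⊆ PhiJ R Pos J w) :
    D ⊆ PhiJ R Pos K w := by
  intro β hβ
  obtain ⟨h_neg, -⟩ := mem_PhiJ.1 (hD hβ)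
  refine mem_PhiJ.2 ⟨h_neg, ?_⟩
  rintro ⟨v, hv, α, hα, h⟩
  have h_span : w⁻¹ β ∈ Submodule.span ℝ K := by
    rw [h, apply_mem_span_iff hv]
    exact Submodule.subset_span hα
  have h_pos : 0 < (t ∘ₗ w.toLinearMap) (-w⁻¹ β) :=
    hB.apply_pos_of_mem_span hK (fun γ hγ => (hw.2 γ hγ).2)
      (hB.neg_mem_of_notMem h_neg.1 h_neg.2) (neg_mem h_span)
  have h_apply : (t ∘ₗ w.toLinearMap) (-w⁻¹ β) = -t β := by simp
  linarith [hDt β hβ]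

end NegativeRoots

section CosetFunctions

/-- The indicator function of the coset `w W_K`. Via these, `L[W^K]` is realised inside the
functions on the group of linear automorphisms, where the groups `L[W^K]` for varying `K` can be
compared. -/
noncomputable def cosetInd (L : Type*) [CommRing L] (R : RootSystemData V) (K : Set V)
    (w : V ≃ₗ[ℝ] V) : (V ≃ₗ[ℝ] V) → L :=
  Set.indicator (w • (WsubJ R K : Set (V ≃ₗ[ℝ] V))) 1

/-- The span of the indicator functions of the cosets `w W_K`, `w ∈ S`. -/
noncomputable def cosetSpan (L : Type*) [CommRing L] (R : RootSystemData V) (K : Set V)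
    (S : Set (V ≃ₗ[ℝ] V)) : Submodule L ((V ≃ₗ[ℝ] V) → L) :=
  Submodule.span L (cosetInd L R K '' S)

/-- The image of `⊕_{α ∈ Δ\J} L[W^{J∪{α}}(D)]` under `∂`, realised in functions as in `cosetInd`. -/
noncomputable def boundarySpan (L : Type*) [CommRing L] (R : RootSystemData V) (Pos Δ J D : Set V) :
    Submodule L ((V ≃ₗ[ℝ] V) → L) :=
  ⨆ α ∈ Δ \ J, cosetSpan L R (J ∪ {α}) (WupJD R Pos (J ∪ {α}) D)

variable {L : Type*} [CommRing L] {R : RootSystemData V} {Pos Δ D J K : Set V}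
  {S : Set (V ≃ₗ[ℝ] V)} {t : V →ₗ[ℝ] ℝ} {w w' y : V ≃ₗ[ℝ] V} {h : (V ≃ₗ[ℝ] V) → L}

lemma cosetInd_apply : cosetInd L R K w y = if w⁻¹ * y ∈ WsubJ R K then 1 else 0 := by
  simp only [cosetInd, Set.indicator_apply, mem_leftCoset_iff, SetLike.mem_coe, Pi.one_apply]

lemma cosetInd_congr (hw : w⁻¹ * w' ∈ WsubJ R K) : cosetInd L R K w = cosetInd L R K w' := by
  rw [cosetInd, cosetInd, (leftCoset_eq_iff _).2 hw]

lemma cosetInd_mul (hy : y ∈ WsubJ R K) : cosetInd L R K w (w' * y) = cosetInd L R K w w' := by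
  simp only [cosetInd_apply, ← mul_assoc, Subgroup.mul_mem_cancel_right _ hy]

lemma apply_mul_of_mem_cosetSpan (hh : h ∈ cosetSpan L R K S) (hy : y ∈ WsubJ R K) :
    h (w * y) = h w := by
  induction hh using Submodule.span_induction with
  | mem _ hf =>
    obtain ⟨x, -, rfl⟩ := hf
    exact cosetInd_mul hy
  | zero => rfl
  | add f g _ _ hf hg => exact congrArg₂ (· + ·) hf hg
  | smul c f _ hf => exact congrArg (c • ·) hf

lemma apply_eq_zero_of_mem_cosetSpan (hh : h ∈ cosetSpan L R K S)
    (hy : ∀ x ∈ S, x⁻¹ * y ∈ WsubJ R K → h x = 0) : h y = 0 := by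
  by_cases hyS : ∃ x ∈ S, x⁻¹ * y ∈ WsubJ R K
  · obtain ⟨x, hx, hxy⟩ := hyS
    rw [← hy x hx hxy, ← apply_mul_of_mem_cosetSpan (w := x) hh hxy, mul_inv_cancel_left]
  · push Not at hyS
    clear hy
    induction hh using Submodule.span_induction with
    | mem _ hf =>
      obtain ⟨x, hx, rfl⟩ := hf
      rw [cosetInd_apply, if_neg (hyS x hx)]
    | zero => rfl
    | add f g _ _ hf hg => rw [Pi.add_apply, hf, hg, add_zero]
    | smul c f _ hf => rw [Pi.smul_apply, hf, smul_zero]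

lemma IsBase.cosetInd_eq_sum (hB : IsBase R Pos Δ) (ht : IsRegular R t) (hJK : J ⊆ K) (hJ : J ⊆ Δ)
    (hw : w ∈ weylGroup R) :
    cosetInd L R K w = ∑ x : WupJ R (posSystem R t) J,
      if w⁻¹ * x ∈ WsubJ R K then cosetInd L R J x else 0 := by
  ext y
  rw [Finset.sum_apply, cosetInd_apply]
  split_ifs with hy
  · have hyW : y ∈ weylGroup R := by simpa using mul_mem hw (WsubJ_le_weylGroup hy)
    obtain ⟨v, hv, hyv, -⟩ := hB.exists_mul_mem_WupJ ht hJ hyW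
    have hwyv : w⁻¹ * (y * v) ∈ WsubJ R K := by
      simpa [mul_assoc] using mul_mem hy (WsubJ_mono hJK hv)
    rw [Finset.sum_eq_single ⟨y * v, hyv⟩, if_pos hwyv, cosetInd_apply, if_pos (by simpa using hv)]
    · intro x _ hne
      split_ifs
      · rw [cosetInd_apply, if_neg fun hxy => hne (Subtype.ext ?_)]
        exact hB.eq_of_inv_mul_mem_WsubJ hJ x.2 hyv (by simpa [mul_assoc] using mul_mem hxy hv)
      · rfl
    · exact fun h => absurd (Finset.mem_univ _) h
  · refine (Finset.sum_eq_zero fun x _ => ?_).symm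
    split_ifs with hx
    · rw [cosetInd_apply, if_neg fun hxy => hy ?_]
      simpa [mul_assoc] using mul_mem hx (WsubJ_mono hJK hxy)
    · rfl

lemma IsBase.cosetInd_mem_cosetSpan (hB : IsBase R Pos Δ) (hK : K ⊆ Δ) (hw : w ∈ weylGroup R)
    (hD : D ⊆ PhiJ R Pos K w) : cosetInd L R K w ∈ cosetSpan L R K (WupJD R Pos K D) := by
  obtain ⟨t, ht, rfl⟩ := hB.exists_isRegular
  obtain ⟨v, hv, hwv, -⟩ := hB.exists_mul_mem_WupJ ht hK hw
  have hv' : w⁻¹ * (w * v) ∈ WsubJ R K := by simpa using hv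
  rw [cosetInd_congr hv']
  exact Submodule.subset_span ⟨w * v, ⟨hwv, by rwa [hB.PhiJ_congr hK hv']⟩, rfl⟩

lemma IsBase.cosetInd_mem_boundarySpan (hB : IsBase R Pos Δ) (hJ : J ⊆ Δ) {α : V} (hα : α ∈ Δ \ J)
    (hw : w ∈ weylGroup R) (hD : D ⊆ PhiJ R Pos (J ∪ {α}) w) :
    cosetInd L R (J ∪ {α}) w ∈ boundarySpan L R Pos Δ J D :=
  Submodule.mem_iSup_of_mem α <| Submodule.mem_iSup_of_mem hα <|
    hB.cosetInd_mem_cosetSpan (Set.union_subset hJ (Set.singleton_subset_iff.2 hα.1)) hw hD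

lemma boundarySpan_mono {D' : Set V} (h : D' ⊆ D) :
    boundarySpan L R Pos Δ J D ≤ boundarySpan L R Pos Δ J D' :=
  iSup₂_mono fun _ _ => Submodule.span_mono <| Set.image_mono fun _ hw => ⟨hw.1, h.trans hw.2⟩

lemma IsBase.boundarySpan_le_cosetSpan (hB : IsBase R Pos Δ) (hJ : J ⊆ Δ) :
    boundarySpan L R Pos Δ J D ≤ cosetSpan L R J (WupJD R Pos J D) := by
  obtain ⟨t, ht, -⟩ := hB.exists_isRegular
  refine iSup₂_le fun α hα => Submodule.span_le.2 ?_
  rintro _ ⟨w, hw, rfl⟩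
  have hK : J ∪ {α} ⊆ Δ := Set.union_subset hJ (Set.singleton_subset_iff.2 hα.1)
  rw [hB.cosetInd_eq_sum ht Set.subset_union_left hJ hw.1.1]
  refine Submodule.sum_mem _ fun x _ => ?_
  split_ifs with hx
  · refine hB.cosetInd_mem_cosetSpan hJ x.2.1
      (subset_trans ?_ (PhiJ_antitone (K := J ∪ {α}) Set.subset_union_left))
    rw [hB.PhiJ_congr hK hx]
    exact hw.2
  · exact zero_mem _

end CosetFunctions

section Filtration

variable {L : Type*} [CommRing L] {R : RootSystemData V} {Pos Δ D J : Set V} {t : V →ₗ[ℝ] ℝ}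
  {w : V ≃ₗ[ℝ] V}

@[elab_as_elim]
lemma weylGroup_induction {p : (V ≃ₗ[ℝ] V) → Prop} (f : (V ≃ₗ[ℝ] V) → ℝ)
    (ih : ∀ w ∈ weylGroup R, (∀ w' ∈ weylGroup R, f w' < f w → p w') → p w)
    (hw : w ∈ weylGroup R) : p w := by
  have h_fin : (weylGroup R : Set (V ≃ₗ[ℝ] V)).Finite :=
    Set.finite_coe_iff.1 (inferInstanceAs (Finite (weylGroup R)))
  have h_wf : (weylGroup R : Set (V ≃ₗ[ℝ] V)).WellFoundedOn fun w w' => f w < f w' :=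
    Set.wellFoundedOn_image.1 (h_fin.image f).wellFoundedOn
  exact h_wf.induction hw ih

lemma IsBase.cosetInd_mem_boundarySpan_sup (hB : IsBase R Pos Δ) (hJ : J ⊆ Δ) (ht : IsRegular R t)
    (hDt : ∀ β ∈ D, 0 < t β) (hw : w ∈ WupJ R (posSystem R t) J) (hD : D ⊆ PhiJ R Pos J w) :
    cosetInd L R J w ∈
      boundarySpan L R Pos Δ J D ⊔ cosetSpan L R J (VupJ R (posSystem R t) Δ J) := by
  have hwW := hw.1
  revert hw hD
  refine weylGroup_induction (fun w => t (w (twoRho Pos))) (fun w _ ih hw hD => ?_) hwW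
  by_cases hwV : w ∈ VupJ R (posSystem R t) Δ J
  · exact Submodule.mem_sup_right (Submodule.subset_span ⟨w, hwV, rfl⟩)
  obtain ⟨α, hα, hwα⟩ : ∃ α ∈ Δ \ J, w ∈ WupJ R (posSystem R t) (J ∪ {α}) := by
    by_contra! h
    exact hwV ⟨hw, fun α hα hαJ => h α ⟨hα, hαJ⟩⟩
  have hK : J ∪ {α} ⊆ Δ := Set.union_subset hJ (Set.singleton_subset_iff.2 hα.1)
  have hDα : D ⊆ PhiJ R Pos (J ∪ {α}) w := hB.subset_PhiJ_of_forall_pos hK hwα hDt hD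
  have h_bdry := hB.cosetInd_mem_boundarySpan (L := L) hJ hα hw.1 hDα
  rw [hB.cosetInd_eq_sum ht Set.subset_union_left hJ hw.1,
    ← Finset.add_sum_erase _ _ (Finset.mem_univ ⟨w, hw⟩), if_pos (by simp)] at h_bdry
  refine (Submodule.add_mem_iff_left _ (Submodule.sum_mem _ fun x hx => ?_)).1
    (Submodule.mem_sup_left h_bdry)
  split_ifs with hwx
  · have hne : w⁻¹ * x ≠ 1 := fun h =>
      Finset.ne_of_mem_erase hx (Subtype.ext (inv_mul_eq_one.1 h).symm)
    have h_lt := hB.apply_mul_twoRho_lt ht hK hwα hwx hne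
    rw [mul_inv_cancel_left] at h_lt
    refine ih x x.2.1 h_lt x.2
      (subset_trans ?_ (PhiJ_antitone (K := J ∪ {α}) Set.subset_union_left))
    rwa [hB.PhiJ_congr hK hwx]
  · exact zero_mem _

lemma IsBase.cosetSpan_le_boundarySpan_sup (hB : IsBase R Pos Δ) (hJ : J ⊆ Δ) (ht : IsRegular R t)
    (hDt : ∀ β ∈ D, 0 < t β) :
    cosetSpan L R J (WupJD R Pos J D) ≤
      boundarySpan L R Pos Δ J D ⊔ cosetSpan L R J (VupJ R (posSystem R t) Δ J) := by
  refine Submodule.span_le.2 ?_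
  rintro _ ⟨w, hw, rfl⟩
  obtain ⟨v, hv, hwv, -⟩ := hB.exists_mul_mem_WupJ ht hJ hw.1.1
  have hv' : w⁻¹ * (w * v) ∈ WsubJ R J := by simpa using hv
  rw [cosetInd_congr hv']
  exact hB.cosetInd_mem_boundarySpan_sup hJ ht hDt hwv (by rw [hB.PhiJ_congr hJ hv']; exact hw.2)

end Filtration

section AlternatingSums

open RootSystemData

/-- The determinant of a linear automorphism up to positive scalars, which on the Weyl group is the
sign character `w ↦ (-1) ^ ℓ(w)`; as an element of `SignType` it can be cast to any ring. -/
noncomputable def detSign (w : V ≃ₗ[ℝ] V) : SignType :=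
  SignType.sign (LinearMap.det (w : V →ₗ[ℝ] V))

/-- The alternating sum of a function over the coset `w W_K`. -/
noncomputable def altSum (L : Type*) [CommRing L] (R : RootSystemData V) (K : Set V)
    (w : V ≃ₗ[ℝ] V) : ((V ≃ₗ[ℝ] V) → L) →ₗ[L] L :=
  ∑ v : WsubJ R K, (detSign (v : V ≃ₗ[ℝ] V) : L) • LinearMap.proj (w * v)

variable {L : Type*} [CommRing L] {R : RootSystemData V} {Pos Δ D J K : Set V} {t : V →ₗ[ℝ] ℝ}
  {w : V ≃ₗ[ℝ] V} {h : (V ≃ₗ[ℝ] V) → L}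

lemma detSign_mul_refl {α : V} (hα : α ∈ R.Phi) : detSign (w * R.refl α) = -detSign w := by
  have : Module.Finite ℝ V := ⟨⟨R.finite.toFinset, by rw [R.finite.coe_toFinset, R.span_top]⟩⟩
  have h_refl : (R.refl α : V →ₗ[ℝ] V) = LinearMap.transvection (-R.pairing α) α := by
    ext x
    simp [refl_apply hα, LinearMap.transvection.apply, sub_eq_add_neg]
  have h_det : LinearMap.det (R.refl α : V →ₗ[ℝ] V) = -1 := by
    rw [h_refl, LinearMap.transvection.det, LinearMap.neg_apply, R.pairing_self α hα]
    norm_num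
  have h_mul : ((w * R.refl α : V ≃ₗ[ℝ] V) : V →ₗ[ℝ] V) = (w : V →ₗ[ℝ] V) * R.refl α := rfl
  rw [detSign, detSign, h_mul, map_mul, h_det, mul_neg_one, Left.sign_neg]

lemma detSign_one : detSign (1 : V ≃ₗ[ℝ] V) = 1 := by
  rw [detSign, LinearEquiv.coe_toLinearMap_one, LinearMap.det_id, sign_one]

lemma altSum_apply :
    altSum L R K w h = ∑ v : WsubJ R K, (detSign (v : V ≃ₗ[ℝ] V) : L) * h (w * v) := by
  simp [altSum]

lemma altSum_eq_zero {α : V} (hαK : α ∈ K) (hα : α ∈ R.Phi) (hh : ∀ y, h (y * R.refl α) = h y) :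
    altSum L R K w h = 0 := by
  rw [altSum_apply]
  refine Finset.sum_involution (fun v _ => v * ⟨R.refl α, refl_mem_WsubJ hαK⟩) ?_ ?_ ?_ ?_
  · intro v _
    simp [detSign_mul_refl hα, ← mul_assoc, hh]
  · intro v _ _ h_eq
    exact refl_ne_one hα (congrArg Subtype.val (mul_eq_left.1 h_eq))
  · exact fun _ _ => Finset.mem_univ _
  · intro v _
    ext1
    simp [mul_assoc, refl_mul_self]

lemma IsBase.boundarySpan_le_ker_altSum (hB : IsBase R Pos Δ) :
    boundarySpan L R Pos Δ J D ≤ LinearMap.ker (altSum L R (Δ \ J) w) :=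
  iSup₂_le fun _ hα _ hh => LinearMap.mem_ker.2 <|
    altSum_eq_zero hα (hB.delta_sub_Phi hα.1) fun _ =>
      apply_mul_of_mem_cosetSpan hh (refl_mem_WsubJ (Or.inr rfl))

lemma IsBase.mem_WupJ_neg_of_mem_VupJ (hB : IsBase R Pos Δ) (ht : IsRegular R t)
    (hw : w ∈ VupJ R (posSystem R t) Δ J) : w ∈ WupJ R (posSystem R (-t)) (Δ \ J) := by
  refine ⟨hw.1.1, fun α hα => ?_⟩
  have hwα : w α ∈ R.Phi := (apply_mem_Phi hw.1.1).2 (hB.delta_sub_Phi hα.1)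
  refine ⟨hwα, neg_pos.2 (lt_of_not_ge fun h_nonneg => hw.2 α hα.1 hα.2 ⟨hw.1.1, ?_⟩)⟩
  rintro β (hβ | rfl)
  exacts [hw.1.2 β hβ, ⟨hwα, h_nonneg.lt_of_ne' (ht _ hwα)⟩]

lemma IsBase.apply_eq_zero_of_mem_VupJ (hB : IsBase R Pos Δ) (hJ : J ⊆ Δ) (ht : IsRegular R t)
    (hh : h ∈ cosetSpan L R J (VupJ R (posSystem R t) Δ J))
    (hh_bdry : h ∈ boundarySpan L R Pos Δ J D) (hw : w ∈ VupJ R (posSystem R t) Δ J) : h w = 0 := by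
  have hwW := hw.1.1
  revert hw
  refine weylGroup_induction (fun w => -t (w (twoRho Pos))) (fun w _ ih hw => ?_) hwW
  have h_alt : altSum L R (Δ \ J) w h = 0 := hB.boundarySpan_le_ker_altSum hh_bdry
  rw [altSum_apply, Finset.sum_eq_single 1] at h_alt
  · simpa [detSign_one] using h_alt
  · intro v _ hv
    have h_lt := hB.apply_mul_twoRho_lt ht.neg Set.sdiff_subset (hB.mem_WupJ_neg_of_mem_VupJ ht hw)
      v.2 (fun h => hv (Subtype.ext h))
    suffices h (w * v) = 0 by rw [this, mul_zero]
    refine apply_eq_zero_of_mem_cosetSpan hh fun x hx hxv => ih x hx.1.1 ?_ hx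
    have h_le := hB.apply_mul_twoRho_le ht hJ hx.1 hxv
    rw [mul_inv_cancel_left] at h_le
    exact lt_of_le_of_lt (neg_le_neg h_le) h_lt
  · exact fun h => absurd (Finset.mem_univ _) h

lemma IsBase.cosetSpan_inf_boundarySpan_eq_bot (hB : IsBase R Pos Δ) (hJ : J ⊆ Δ)
    (ht : IsRegular R t) :
    cosetSpan L R J (VupJ R (posSystem R t) Δ J) ⊓ boundarySpan L R Pos Δ J D = ⊥ := by
  refine (Submodule.eq_bot_iff _).2 fun h hh => funext fun y => ?_
  exact apply_eq_zero_of_mem_cosetSpan hh.1 fun x hx _ =>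
    hB.apply_eq_zero_of_mem_VupJ hJ ht hh.1 hh.2 hx

lemma IsBase.exists_isRegular_forall_pos (hB : IsBase R Pos Δ) (hw : w ∈ weylGroup R)
    (hD : D ⊆ PhiJ R Pos J w) : ∃ t : V →ₗ[ℝ] ℝ, IsRegular R t ∧ ∀ β ∈ D, 0 < t β := by
  obtain ⟨t, ht, rfl⟩ := hB.exists_isRegular
  refine ⟨-(t ∘ₗ (w⁻¹ : V ≃ₗ[ℝ] V).toLinearMap), (ht.comp (inv_mem hw)).neg, fun β hβ => ?_⟩
  obtain ⟨⟨h_Phi, h_neg⟩, -⟩ := mem_PhiJ.1 (hD hβ)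
  exact neg_pos.2 (lt_of_le_of_ne (not_lt.1 fun h => h_neg ⟨h_Phi, h⟩) (ht _ h_Phi))

theorem IsBase.cosetSpan_inf_boundarySpan (hB : IsBase R Pos Δ) (hJ : J ⊆ Δ) :
    cosetSpan L R J (WupJD R Pos J D) ⊓ boundarySpan L R Pos Δ J ∅ =
      boundarySpan L R Pos Δ J D := by
  refine le_antisymm ?_ (le_inf (hB.boundarySpan_le_cosetSpan hJ)
    (boundarySpan_mono (Set.empty_subset D)))
  rcases (WupJD R Pos J D).eq_empty_or_nonempty with h_empty | ⟨w, hw⟩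
  · simp [h_empty, cosetSpan]
  obtain ⟨t, ht, hDt⟩ := hB.exists_isRegular_forall_pos hw.1.1 hw.2
  calc cosetSpan L R J (WupJD R Pos J D) ⊓ boundarySpan L R Pos Δ J ∅
      ≤ (boundarySpan L R Pos Δ J D ⊔ cosetSpan L R J (VupJ R (posSystem R t) Δ J)) ⊓
          boundarySpan L R Pos Δ J ∅ :=
        inf_le_inf_right _ (hB.cosetSpan_le_boundarySpan_sup hJ ht hDt)
    _ = boundarySpan L R Pos Δ J D := by
        rw [sup_inf_assoc_of_le _ (boundarySpan_mono (Set.empty_subset D)),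
          hB.cosetSpan_inf_boundarySpan_eq_bot hJ ht, sup_bot_eq]

end AlternatingSums

section Realisation

variable {L : Type} [CommRing L] {R : RootSystemData V} {Pos Δ D J : Set V}

/-- The embedding of `L[W^J]` into functions which sends `w` to the indicator of `w W_J`. -/
noncomputable def cosetMap (L : Type) [CommRing L] (R : RootSystemData V) (Pos J : Set V) :
    (WupJ R Pos J →₀ L) →ₗ[L] ((V ≃ₗ[ℝ] V) → L) :=
  Finsupp.linearCombination L fun w => cosetInd L R J w

lemma IsBase.cosetMap_apply_coe (hB : IsBase R Pos Δ) (hJ : J ⊆ Δ) (f : WupJ R Pos J →₀ L)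
    (w : WupJ R Pos J) : cosetMap L R Pos J f w = f w := by
  obtain ⟨t, -, rfl⟩ := hB.exists_isRegular
  rw [cosetMap, Finsupp.linearCombination_apply, Finsupp.sum_fintype _ _ (by simp),
    Finset.sum_apply, Finset.sum_eq_single w]
  · simp [cosetInd_apply]
  · intro x _ hne
    have hxw : (x : V ≃ₗ[ℝ] V)⁻¹ * w ∉ WsubJ R J := fun h =>
      hne (Subtype.ext (hB.eq_of_inv_mul_mem_WsubJ hJ x.2 w.2 h))
    rw [Pi.smul_apply, cosetInd_apply, if_neg hxw, smul_zero]
  · exact fun h => absurd (Finset.mem_univ _) h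

lemma IsBase.cosetMap_injective (hB : IsBase R Pos Δ) (hJ : J ⊆ Δ) :
    Function.Injective (cosetMap L R Pos J) := fun f g h => by
  ext w
  rw [← hB.cosetMap_apply_coe hJ f, h, hB.cosetMap_apply_coe hJ]

lemma range_cosetMap_comp_inclCod :
    LinearMap.range (cosetMap L R Pos J ∘ₗ inclCod R Pos J D L) =
      cosetSpan L R J (WupJD R Pos J D) := by
  rw [cosetMap, inclCod, ← Finsupp.linearCombination_comp, Finsupp.range_linearCombination,
    cosetSpan, Set.image_eq_range]
  rfl

lemma smul_WsubJ_subset_smul_WsubJ_iff {K : Set V} (h : J ⊆ K) {w w' : V ≃ₗ[ℝ] V} :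
    w' • (WsubJ R J : Set (V ≃ₗ[ℝ] V)) ⊆ w • (WsubJ R K : Set (V ≃ₗ[ℝ] V)) ↔
      w⁻¹ * w' ∈ WsubJ R K := by
  refine ⟨fun hw => (mem_leftCoset_iff w).1 (hw ⟨1, one_mem _, mul_one w'⟩), fun hw => ?_⟩
  rw [(leftCoset_eq_iff _).2 hw]
  exact Set.smul_set_mono (WsubJ_mono h)

lemma IsBase.cosetMap_comp_MJd (hB : IsBase R Pos Δ) (hJ : J ⊆ Δ) :
    cosetMap L R Pos J ∘ₗ MJd R Pos Δ J L =
      Finsupp.linearCombination L fun x : MJdom R Pos Δ J => cosetInd L R (J ∪ {x.1.1}) x.2.1 := by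
  obtain ⟨t, ht, rfl⟩ := hB.exists_isRegular
  refine Finsupp.lhom_ext' fun x => LinearMap.ext_ring ?_
  have h_sub : J ⊆ J ∪ {x.1.1} := Set.subset_union_left
  simp only [LinearMap.comp_apply, Finsupp.lsingle_apply, MJd, Finsupp.lift_apply,
    Finsupp.linearCombination_single, Finsupp.sum_single_index, zero_smul, one_smul,
    finsum_eq_sum_of_fintype, map_sum, smul_WsubJ_subset_smul_WsubJ_iff h_sub, apply_ite, map_zero,
    cosetMap, hB.cosetInd_eq_sum ht h_sub hJ x.2.2.1]

lemma iSup_cosetSpan_eq_span_range (S : V → Set (V ≃ₗ[ℝ] V)) :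
    ⨆ α ∈ Δ \ J, cosetSpan L R (J ∪ {α}) (S α) =
      Submodule.span L (Set.range fun x : Σ α : ↥(Δ \ J), ↥(S α) =>
        cosetInd L R (J ∪ {x.1.1}) x.2.1) := by
  simp only [Set.range_sigma_eq_iUnion_range, Submodule.span_iUnion, iSup_subtype', cosetSpan,
    Set.image_eq_range]

lemma IsBase.range_cosetMap_comp_MJd (hB : IsBase R Pos Δ) (hJ : J ⊆ Δ) :
    LinearMap.range (cosetMap L R Pos J ∘ₗ MJd R Pos Δ J L) = boundarySpan L R Pos Δ J ∅ := by
  have h_empty : ∀ K, WupJD R Pos K ∅ = WupJ R Pos K := fun K =>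
    Set.sep_eq_self_iff_mem_true.2 fun _ _ => Set.empty_subset _
  simp only [boundarySpan, h_empty]
  rw [hB.cosetMap_comp_MJd hJ, Finsupp.range_linearCombination, iSup_cosetSpan_eq_span_range]
  rfl

lemma IsBase.range_cosetMap_comp_MJd_comp_inclDom (hB : IsBase R Pos Δ) (hJ : J ⊆ Δ) :
    LinearMap.range (cosetMap L R Pos J ∘ₗ MJd R Pos Δ J L ∘ₗ inclDom R Pos Δ J D L) =
      boundarySpan L R Pos Δ J D := by
  have h_comp : cosetMap L R Pos J ∘ₗ MJd R Pos Δ J L ∘ₗ inclDom R Pos Δ J D L =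
      Finsupp.linearCombination L fun x : MJdomD R Pos Δ J D =>
        cosetInd L R (J ∪ {x.1.1}) x.2.1 := by
    rw [← LinearMap.comp_assoc, hB.cosetMap_comp_MJd hJ]
    exact (Finsupp.linearCombination_comp L _).symm
  rw [h_comp, Finsupp.range_linearCombination, boundarySpan, iSup_cosetSpan_eq_span_range]
  rfl

end Realisation

theorem statement_2_general {V : Type} [AddCommGroup V] [Module ℝ V]
    (R : RootSystemData V) (Pos Δ : Set V) (hBase : IsBase R Pos Δ)
    (J : Set V) (hJ : J ⊆ Δ) (L : Type) [CommRing L] (D : Set V) :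
    (∀ f : (MJdomD R Pos Δ J D) →₀ L,
      ∃ g : (↥(WupJD R Pos J D)) →₀ L,
        MJd R Pos Δ J L (inclDom R Pos Δ J D L f) = inclCod R Pos J D L g) ∧
    (∀ g : (↥(WupJD R Pos J D)) →₀ L,
      MJnabla R Pos Δ J L (inclCod R Pos J D L g) = 0 ↔
      ∃ f : (MJdomD R Pos Δ J D) →₀ L,
        MJd R Pos Δ J L (inclDom R Pos Δ J D L f) = inclCod R Pos J D L g) := by
  have h_inj := hBase.cosetMap_injective (L := L) hJ
  refine ⟨fun f => ?_, fun g => ⟨fun hg => ?_, fun ⟨f, hf⟩ => ?_⟩⟩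
  · have hf : cosetMap L R Pos J (MJd R Pos Δ J L (inclDom R Pos Δ J D L f)) ∈
        cosetSpan L R J (WupJD R Pos J D) :=
      hBase.boundarySpan_le_cosetSpan hJ
        ((hBase.range_cosetMap_comp_MJd_comp_inclDom hJ).le ⟨f, rfl⟩)
    obtain ⟨g, hg⟩ := range_cosetMap_comp_inclCod.ge hf
    exact ⟨g, h_inj hg.symm⟩
  · obtain ⟨f, hf⟩ := (Submodule.Quotient.mk_eq_zero _).1 hg
    have hg_mem : cosetMap L R Pos J (inclCod R Pos J D L g) ∈
        cosetSpan L R J (WupJD R Pos J D) ⊓ boundarySpan L R Pos Δ J ∅ :=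
      ⟨range_cosetMap_comp_inclCod.le ⟨g, rfl⟩,
        (hBase.range_cosetMap_comp_MJd hJ).le ⟨f, congrArg (cosetMap L R Pos J) hf⟩⟩
    rw [hBase.cosetSpan_inf_boundarySpan hJ,
      ← hBase.range_cosetMap_comp_MJd_comp_inclDom hJ] at hg_mem
    obtain ⟨f', hf'⟩ := hg_mem
    exact ⟨f', h_inj hf'⟩
  · exact (Submodule.Quotient.mk_eq_zero _).2 ⟨_, hf⟩

/-- For a `J`-quasi-parabolic subset `D ⊆ Φ`, the map `∂` carries
`⊕_{α ∈ Δ\J} L[W^{J∪{α}}(D)]` into `L[W^J(D)]`, and the restricted sequence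
`⊕_{α ∈ Δ\J} L[W^{J∪{α}}(D)] → L[W^J(D)] → M_J(L)` is exact at the middle term:
an element of `L[W^J(D)]` is killed by `∇` iff it is in the image of the
restriction of `∂`. -/
theorem statement_2 {V : Type} [AddCommGroup V] [Module ℝ V]
    (R : RootSystemData V) (Pos Δ : Set V) (hBase : IsBase R Pos Δ)
    (J : Set V) (hJ : J ⊆ Δ) (L : Type) [CommRing L]
    (D : Set V) (hD : D ⊆ R.Phi) (hDqp : IsQuasiParabolic R Pos J D) :
    (∀ f : (MJdomD R Pos Δ J D) →₀ L,
      ∃ g : (↥(WupJD R Pos J D)) →₀ L,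
        MJd R Pos Δ J L (inclDom R Pos Δ J D L f) = inclCod R Pos J D L g) ∧
    (∀ g : (↥(WupJD R Pos J D)) →₀ L,
      MJnabla R Pos Δ J L (inclCod R Pos J D L g) = 0 ↔
      ∃ f : (MJdomD R Pos Δ J D) →₀ L,
        MJd R Pos Δ J L (inclDom R Pos Δ J D L f) = inclCod R Pos J D L g) :=
  statement_2_general R Pos Δ hBase J hJ L D

end PaperSp
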